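/- Explicit Stein kernel under the Bernoulli null and a product kernel: assume q̃ = ER(a*) with a* ∈ (0,1), and that the feature map satisfies ⟨Φ(u),Φ(v)⟩_H = Π_{t∈[N]} l_t(u_t,v_t), where each l_t : {0,1}×{0,1} → ℝ is symmetric with l_t(0,0) = l_t(1,1) = 1. Then ξ_s(x) = (a* − x_s)·(Φ(x^{(s,1)}) − Φ(x^{(s,0)})) for every s, and for s ≠ s': h_x(s,s') = (a*−x_s)(a*−x_{s'})·(l_s(1,x_s) − l_s(0,x_s))·(l_{s'}(1,x_{s'}) − l_{s'}(0,x_{s'})), while h_x(s,s) = (a*−x_s)²·(2 − 2·l_s(0,1)). Consequently gKSS(q̃;x)² = (1/N²)·[ Σ_{s≠s'} (a*−x_s)(a*−x_{s'})(l_s(1,x_s)−l_s(0,x_s))(l_{s'}(1,x_{s'})−l_{s'}(0,x_{s'})) + Σ_s (a*−x_s)²(2 − 2 l_s(0,1)) ]. -/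

import Mathlib

open Finset
open scoped RealInnerProductSpace

/-- Replace coordinate `s` of `x` by `1` (i.e. `true`). -/
def up1 {N : ℕ} (x : Fin N → Bool) (s : Fin N) : Fin N → Bool := Function.update x s true

/-- Replace coordinate `s` of `x` by `0` (i.e. `false`). -/
def up0 {N : ℕ} (x : Fin N → Bool) (s : Fin N) : Fin N → Bool := Function.update x s false

/-- A bit regarded as a real number. -/
def bval (b : Bool) : ℝ := if b then 1 else 0

/-- Conditional probability `q(x^{(s,1)} | x_{-s})`. -/
noncomputable def condP {N : ℕ} (q : (Fin N → Bool) → ℝ) (x : Fin N → Bool) (s : Fin N) : ℝ :=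
  q (up1 x s) / (q (up1 x s) + q (up0 x s))

/-- The Bernoulli random graph pmf `ER(p)` on `{0,1}^N`. -/
noncomputable def erPMF {N : ℕ} (p : ℝ) (x : Fin N → Bool) : ℝ :=
  p ^ (univ.filter fun s => x s = true).card *
    (1 - p) ^ (N - (univ.filter fun s => x s = true).card)

variable {H : Type*} [NormedAddCommGroup H] [InnerProductSpace ℝ H]

/-- `ξ_s(x) := q(x^{(s,1)}|x_{−s})·(Φ(x^{(s,1)}) − Φ(x^{(s,0)})) + (Φ(x^{(s,0)}) − Φ(x))`. -/
noncomputable def xi {N : ℕ} (q : (Fin N → Bool) → ℝ) (Φ : (Fin N → Bool) → H) (s : Fin N)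
    (x : Fin N → Bool) : H :=
  condP q x s • (Φ (up1 x s) - Φ (up0 x s)) + (Φ (up0 x s) - Φ x)

/-!
Checking the two values of `x s` gives
`ξ_s(x) = (q(x^{(s,1)} | x_{-s}) - x_s) • (Φ(x^{(s,1)}) - Φ(x^{(s,0)}))` for every `q`. Since
`l_t(b,b) = 1`, only the coordinates where `u` and `v` differ contribute to `∏ t, l_t(u_t,v_t)`, so
the inner products of these differences involve at most two factors. Under `ER(a)` the coordinates
are independent, so the conditional probability of a one at `s` is `a`.
-/

section ProductKernel

variable {ι : Type*} [Fintype ι] {α : ι → Type*}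

section Prod

variable [DecidableEq ι] {M : Type*} [CommMonoid M] {k : ∀ i, α i → α i → M}

lemma prod_update_update_same (hdiag : ∀ i a, k i a a = 1) (x : ∀ i, α i) (i : ι) (a b : α i) :
    ∏ t, k t (Function.update x i a t) (Function.update x i b t) = k i a b := by
  rw [Fintype.prod_eq_single i fun t ht => by simp [ht, hdiag]]
  simp

lemma prod_update_update_of_ne (hdiag : ∀ i a, k i a a = 1) (x : ∀ i, α i) {i j : ι}
    (hij : i ≠ j) (a : α i) (b : α j) :
    ∏ t, k t (Function.update x i a t) (Function.update x j b t) =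
      k i a (x i) * k j (x j) b := by
  rw [Fintype.prod_eq_mul i j hij fun t ht => by simp [ht.1, ht.2, hdiag]]
  simp [hij, hij.symm]

end Prod

variable {k : ∀ i, α i → α i → ℝ} {Ψ : (∀ i, α i) → H}

lemma prod_kernel_comm (hΨ : ∀ u v, ⟪Ψ u, Ψ v⟫ = ∏ i, k i (u i) (v i))
    (hdiag : ∀ i a, k i a a = 1) (x : ∀ i, α i) (i : ι) (a b : α i) : k i a b = k i b a := by
  classical
  rw [← prod_update_update_same hdiag x i a b, ← prod_update_update_same hdiag x i b a,
    ← hΨ, ← hΨ, real_inner_comm]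

variable [DecidableEq ι]

lemma norm_sub_update_sq (hΨ : ∀ u v, ⟪Ψ u, Ψ v⟫ = ∏ i, k i (u i) (v i))
    (hdiag : ∀ i a, k i a a = 1) (x : ∀ i, α i) (i : ι) (a b : α i) :
    ‖Ψ (Function.update x i a) - Ψ (Function.update x i b)‖ ^ 2 = 2 - 2 * k i a b := by
  rw [norm_sub_sq_real, ← real_inner_self_eq_norm_sq, ← real_inner_self_eq_norm_sq]
  simp only [hΨ, prod_update_update_same hdiag, hdiag, prod_const_one]
  ring

lemma inner_sub_update_of_ne (hΨ : ∀ u v, ⟪Ψ u, Ψ v⟫ = ∏ i, k i (u i) (v i))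
    (hdiag : ∀ i a, k i a a = 1) (x : ∀ i, α i) {i j : ι} (hij : i ≠ j)
    (a a' : α i) (b b' : α j) :
    ⟪Ψ (Function.update x i a) - Ψ (Function.update x i a'),
        Ψ (Function.update x j b) - Ψ (Function.update x j b')⟫ =
      (k i a (x i) - k i a' (x i)) * (k j b (x j) - k j b' (x j)) := by
  rw [prod_kernel_comm hΨ hdiag x j b, prod_kernel_comm hΨ hdiag x j b']
  simp only [inner_sub_left, inner_sub_right, hΨ, prod_update_update_of_ne hdiag x hij]
  ring

end ProductKernel

lemma norm_sum_sq_eq_sum_ne_add_sum {ι : Type*} [DecidableEq ι] (s : Finset ι) (v : ι → H) :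
    ‖∑ i ∈ s, v i‖ ^ 2 =
      (∑ i ∈ s, ∑ j ∈ s, if i ≠ j then ⟪v i, v j⟫ else 0) + ∑ i ∈ s, ⟪v i, v i⟫ := by
  rw [← real_inner_self_eq_norm_sq, sum_inner, ← sum_add_distrib]
  refine sum_congr rfl fun i hi => ?_
  rw [inner_sum, ← sum_erase_add s _ hi, ← sum_filter, filter_ne]

section BernoulliGraph

variable {N : ℕ}

lemma erPMF_eq_prod (p : ℝ) (x : Fin N → Bool) :
    erPMF p x = ∏ t, if x t = true then p else 1 - p := by
  have card_zeros : #{t | ¬x t = true} = N - #{t | x t = true} := by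
    rw [filter_not, card_univ_sdiff, Fintype.card_fin]
  rw [prod_ite, prod_const, prod_const, card_zeros, erPMF]

lemma erPMF_update (p : ℝ) (x : Fin N → Bool) (s : Fin N) (b : Bool) :
    erPMF p (Function.update x s b) =
      (if b = true then p else 1 - p) * ∏ t ∈ univ.erase s, if x t = true then p else 1 - p := by
  rw [erPMF_eq_prod, ← mul_prod_erase univ _ (mem_univ s), Function.update_self]
  congr 1
  exact prod_congr rfl fun t ht => by rw [Function.update_of_ne (ne_of_mem_erase ht)]

lemma condP_erPMF {p : ℝ} (hp₀ : p ≠ 0) (hp₁ : p ≠ 1) (x : Fin N → Bool) (s : Fin N) :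
    condP (erPMF p) x s = p := by
  have rest_ne_zero : (∏ t ∈ univ.erase s, if x t = true then p else 1 - p) ≠ 0 :=
    prod_ne_zero_iff.2 fun t _ => by split_ifs; exacts [hp₀, sub_ne_zero.2 hp₁.symm]
  simp only [condP, up1, up0, erPMF_update, if_true, Bool.false_eq_true, if_false]
  rw [← add_mul, add_sub_cancel, one_mul, mul_div_cancel_right₀ _ rest_ne_zero]

end BernoulliGraph

section SteinKernel

variable {N : ℕ}

lemma xi_eq_smul (q : (Fin N → Bool) → ℝ) (Φ : (Fin N → Bool) → H) (s : Fin N)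
    (x : Fin N → Bool) :
    xi q Φ s x = (condP q x s - bval (x s)) • (Φ (up1 x s) - Φ (up0 x s)) := by
  cases hx : x s with
  | false =>
    have up0_eq : up0 x s = x := Function.update_eq_self_iff.2 hx.symm
    simp [xi, bval, up0_eq]
  | true =>
    have up1_eq : up1 x s = x := Function.update_eq_self_iff.2 hx.symm
    simp only [xi, bval, up1_eq, if_true]
    module

variable {l : Fin N → Bool → Bool → ℝ} {Φ : (Fin N → Bool) → H}

lemma inner_xi_of_ne (q : (Fin N → Bool) → ℝ)
    (hK : ∀ u v : Fin N → Bool, ⟪Φ u, Φ v⟫ = ∏ t, l t (u t) (v t))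
    (hdiag : ∀ t b, l t b b = 1) {s s' : Fin N} (hs : s ≠ s') (x : Fin N → Bool) :
    ⟪xi q Φ s x, xi q Φ s' x⟫ =
      (condP q x s - bval (x s)) * (condP q x s' - bval (x s')) *
        (l s true (x s) - l s false (x s)) * (l s' true (x s') - l s' false (x s')) := by
  rw [xi_eq_smul, xi_eq_smul, real_inner_smul_left, real_inner_smul_right, up1, up0, up1, up0,
    inner_sub_update_of_ne hK hdiag x hs]
  ring

lemma inner_xi_self (q : (Fin N → Bool) → ℝ)
    (hK : ∀ u v : Fin N → Bool, ⟪Φ u, Φ v⟫ = ∏ t, l t (u t) (v t))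
    (hdiag : ∀ t b, l t b b = 1) (s : Fin N) (x : Fin N → Bool) :
    ⟪xi q Φ s x, xi q Φ s x⟫ =
      (condP q x s - bval (x s)) ^ 2 * (2 - 2 * l s false true) := by
  rw [xi_eq_smul, real_inner_self_eq_norm_sq, norm_smul, mul_pow, Real.norm_eq_abs, sq_abs,
    norm_sub_rev, up1, up0, norm_sub_update_sq hK hdiag]

end SteinKernel

theorem stein_kernel_bernoulli_product_general {N : ℕ} (q : (Fin N → Bool) → ℝ)
    (l : Fin N → Bool → Bool → ℝ) (Φ : (Fin N → Bool) → H)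
    (hK : ∀ u v : Fin N → Bool, ⟪Φ u, Φ v⟫ = ∏ t : Fin N, l t (u t) (v t))
    (hdiag : ∀ (t : Fin N) (b : Bool), l t b b = 1) :
    (∀ (s : Fin N) (x : Fin N → Bool),
        xi q Φ s x = (condP q x s - bval (x s)) • (Φ (up1 x s) - Φ (up0 x s))) ∧
      (∀ (s s' : Fin N) (x : Fin N → Bool), s ≠ s' →
        ⟪xi q Φ s x, xi q Φ s' x⟫ =
          (condP q x s - bval (x s)) * (condP q x s' - bval (x s')) *
            (l s true (x s) - l s false (x s)) * (l s' true (x s') - l s' false (x s'))) ∧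
      (∀ (s : Fin N) (x : Fin N → Bool),
        ⟪xi q Φ s x, xi q Φ s x⟫ =
          (condP q x s - bval (x s)) ^ 2 * (2 - 2 * l s false true)) ∧
      ∀ x : Fin N → Bool,
        ‖((N : ℝ))⁻¹ • ∑ s : Fin N, xi q Φ s x‖ ^ 2 =
          (((N : ℝ)) ^ 2)⁻¹ *
            ((∑ s : Fin N, ∑ s' : Fin N,
                if s ≠ s' then
                  (condP q x s - bval (x s)) * (condP q x s' - bval (x s')) *
                    (l s true (x s) - l s false (x s)) *
                    (l s' true (x s') - l s' false (x s'))
                else 0) +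
              ∑ s : Fin N, (condP q x s - bval (x s)) ^ 2 * (2 - 2 * l s false true)) := by
  refine ⟨xi_eq_smul q Φ, fun s s' x hs => inner_xi_of_ne q hK hdiag hs x,
    inner_xi_self q hK hdiag, fun x => ?_⟩
  rw [norm_smul, mul_pow, norm_inv, Real.norm_natCast, inv_pow, norm_sum_sq_eq_sum_ne_add_sum]
  simp only [inner_xi_self q hK hdiag]
  congr! 5 with s _ s' _ hs
  exact inner_xi_of_ne q hK hdiag hs x

/-- explicit Stein kernel under the Bernoulli null and a product kernel:
with `q̃ = ER(a*)`, `a* ∈ (0,1)`, `⟪Φ(u),Φ(v)⟫ = Π_t l_t(u_t,v_t)`, each `l_t` symmetric with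
`l_t(0,0) = l_t(1,1) = 1`, one has `ξ_s(x) = (a*−x_s)·(Φ(x^{(s,1)}) − Φ(x^{(s,0)}))`,
the stated formulas for `h_x(s,s')` (`s ≠ s'`) and `h_x(s,s)`, and the resulting closed form
for `gKSS(q̃;x)² = ‖(1/N) Σ_s ξ_s(x)‖²`. -/
theorem stein_kernel_bernoulli_product {N : ℕ} (hN : 0 < N) (a : ℝ)
    (ha : a ∈ Set.Ioo (0 : ℝ) 1) (l : Fin N → Bool → Bool → ℝ)
    (Φ : (Fin N → Bool) → H)
    (hK : ∀ u v : Fin N → Bool, ⟪Φ u, Φ v⟫ = ∏ t : Fin N, l t (u t) (v t))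
    (hsym : ∀ (t : Fin N) (b b' : Bool), l t b b' = l t b' b)
    (hdiag0 : ∀ t : Fin N, l t false false = 1) (hdiag1 : ∀ t : Fin N, l t true true = 1) :
    (∀ (s : Fin N) (x : Fin N → Bool),
        xi (erPMF a) Φ s x = (a - bval (x s)) • (Φ (up1 x s) - Φ (up0 x s))) ∧
      (∀ (s s' : Fin N) (x : Fin N → Bool), s ≠ s' →
        ⟪xi (erPMF a) Φ s x, xi (erPMF a) Φ s' x⟫ =
          (a - bval (x s)) * (a - bval (x s')) *
            (l s true (x s) - l s false (x s)) * (l s' true (x s') - l s' false (x s'))) ∧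
      (∀ (s : Fin N) (x : Fin N → Bool),
        ⟪xi (erPMF a) Φ s x, xi (erPMF a) Φ s x⟫ =
          (a - bval (x s)) ^ 2 * (2 - 2 * l s false true)) ∧
      ∀ x : Fin N → Bool,
        ‖((N : ℝ))⁻¹ • ∑ s : Fin N, xi (erPMF a) Φ s x‖ ^ 2 =
          (((N : ℝ)) ^ 2)⁻¹ *
            ((∑ s : Fin N, ∑ s' : Fin N,
                if s ≠ s' then
                  (a - bval (x s)) * (a - bval (x s')) *
                    (l s true (x s) - l s false (x s)) *
                    (l s' true (x s') - l s' false (x s'))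
                else 0) +
              ∑ s : Fin N, (a - bval (x s)) ^ 2 * (2 - 2 * l s false true)) := by
  simpa only [condP_erPMF ha.1.ne' ha.2.ne] using
    stein_kernel_bernoulli_product_general (erPMF a) l Φ hK
      fun t => Bool.forall_bool.2 ⟨hdiag0 t, hdiag1 t⟩
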